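/- arXiv:2004.08019 — 5 statements merged into one kernel-verified Lean document; each statement's English description precedes it below -/
import Mathlib

section
/- Let M be an n×n real matrix obtained as M = A + BK, let A_1,...,A_p be n×n real matrices, B_1,...,B_q be n×m real matrices, K an m×n real matrix, and let α_1,...,α_p ≥ 0 and β_1,...,β_q ≥ 0. Define the linear operator L on n×n real symmetric matrices by L(X) = (A+BK) X (A+BK)ᵀ + Σ_{i=1}^p α_i A_i X A_iᵀ + Σ_{j=1}^q β_j (B_j K) X (B_j K)ᵀ. Then the following are equivalent: (i) for every symmetric positive semidefinite matrix X₀, the iterates Lᵗ(X₀) converge to the zero matrix as t → ∞; (ii) for every symmetric positive definite matrix Q there exists a symmetric positive definite matrix P satisfying P = Q + (A+BK)ᵀ P (A+BK) + Σ_{i=1}^p α_i A_iᵀ P A_i + Σ_{j=1}^q β_j Kᵀ B_jᵀ P B_j K. -/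
/-!
The state second moment evolves under a positive map `X ↦ ∑ k, w k • M k * X * (M k)ᵀ`, whose
adjoint for the trace pairing, `P ↦ ∑ k, w k • (M k)ᵀ * P * M k`, is the operator in the
Lyapunov equation. Hence a solution `P` of that equation satisfies the dissipation identity
`tr (P * Xₜ) - tr (P * Xₜ₊₁) = tr (Q * Xₜ)` along every orbit (`trace_dissipation`).

If `P` solves the equation for `Q = 1`, the nonnegative sequence `tr (P * Xₜ)` is decreasing, hence
convergent, so its decrements `tr Xₜ` tend to zero; the trace dominates all entries of a
positive semidefinite matrix, so `Xₜ → 0`.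

Conversely, if all positive semidefinite orbits tend to zero, a symmetric fixed point `P` of the
adjoint has `tr (P * X₀) = tr (P * Xₜ) → 0`, so its quadratic form vanishes and `P = 0`. In finite
dimension this injectivity gives a symmetric solution of the Lyapunov equation
(`exists_lyapunov_solution`), and summing the dissipation identity along the orbit of `x xᵀ` yields
`xᵀ P x ≥ xᵀ Q x`, so that `P` is positive definite.
-/

open Matrix Filter

section PositiveMap

variable {n : ℕ} {ι : Type*} [Fintype ι]

/-- The second-moment map `X ↦ ∑ k, w k • M k * X * (M k)ᵀ`. -/
def momentMap (w : ι → ℝ) (M : ι → Matrix (Fin n) (Fin n) ℝ) (X : Matrix (Fin n) (Fin n) ℝ) :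
    Matrix (Fin n) (Fin n) ℝ :=
  ∑ k, w k • (M k * X * (M k)ᵀ)

/-- The adjoint `P ↦ ∑ k, w k • (M k)ᵀ * P * M k` of `momentMap w M` for the trace pairing. -/
def adjointMap (w : ι → ℝ) (M : ι → Matrix (Fin n) (Fin n) ℝ) :
    Matrix (Fin n) (Fin n) ℝ →ₗ[ℝ] Matrix (Fin n) (Fin n) ℝ where
  toFun P := ∑ k, w k • ((M k)ᵀ * P * M k)
  map_add' P R := by
    simp only [mul_add, add_mul, smul_add, Finset.sum_add_distrib]
  map_smul' c P := by
    simp only [Matrix.mul_smul, Matrix.smul_mul, RingHom.id_apply, Finset.smul_sum]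
    exact Finset.sum_congr rfl fun k _ => smul_comm _ _ _

lemma trace_mul_momentMap (w : ι → ℝ) (M : ι → Matrix (Fin n) (Fin n) ℝ)
    (P X : Matrix (Fin n) (Fin n) ℝ) :
    trace (P * momentMap w M X) = trace (adjointMap w M P * X) := by
  simp only [momentMap, adjointMap, LinearMap.coe_mk, AddHom.coe_mk, Finset.mul_sum,
    Finset.sum_mul, trace_sum, Matrix.mul_smul, Matrix.smul_mul, trace_smul]
  refine Finset.sum_congr rfl fun k _ => ?_
  rw [← Matrix.mul_assoc, Matrix.trace_mul_comm]
  simp only [Matrix.mul_assoc]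

lemma transpose_adjointMap (w : ι → ℝ) (M : ι → Matrix (Fin n) (Fin n) ℝ)
    (P : Matrix (Fin n) (Fin n) ℝ) : (adjointMap w M P)ᵀ = adjointMap w M Pᵀ := by
  simp [adjointMap, transpose_sum, transpose_mul, Matrix.mul_assoc]

lemma momentMap_posSemidef {w : ι → ℝ} (hw : ∀ k, 0 ≤ w k)
    (M : ι → Matrix (Fin n) (Fin n) ℝ) {X : Matrix (Fin n) (Fin n) ℝ} (hX : X.PosSemidef) :
    (momentMap w M X).PosSemidef :=
  posSemidef_sum _ fun k _ => by
    simpa using (hX.mul_mul_conjTranspose_same (M k)).smul (hw k)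

lemma iterate_momentMap_posSemidef {w : ι → ℝ} (hw : ∀ k, 0 ≤ w k)
    (M : ι → Matrix (Fin n) (Fin n) ℝ) {X : Matrix (Fin n) (Fin n) ℝ} (hX : X.PosSemidef)
    (t : ℕ) : ((momentMap w M)^[t] X).PosSemidef := by
  induction t with
  | zero => exact hX
  | succ t ih =>
    rw [Function.iterate_succ_apply']
    exact momentMap_posSemidef hw M ih

lemma trace_mul_vecMulVec_self (P : Matrix (Fin n) (Fin n) ℝ) (x : Fin n → ℝ) :
    trace (P * vecMulVec x x) = x ⬝ᵥ (P *ᵥ x) := by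
  rw [Matrix.mul_vecMulVec, trace_vecMulVec, dotProduct_comm]

lemma vecMulVec_self_posSemidef (x : Fin n → ℝ) : (vecMulVec x x).PosSemidef := by
  simpa using posSemidef_vecMulVec_self_star x

lemma trace_mul_nonneg {P X : Matrix (Fin n) (Fin n) ℝ} (hP : P.PosSemidef)
    (hX : X.PosSemidef) : 0 ≤ trace (P * X) := by
  obtain ⟨C, rfl⟩ : ∃ C : Matrix (Fin n) (Fin n) ℝ, X = Cᴴ * C := by
    open scoped MatrixOrder in
    exact CStarAlgebra.nonneg_iff_eq_star_mul_self.mp hX.nonneg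
  rw [← Matrix.mul_assoc, Matrix.trace_mul_comm, ← Matrix.mul_assoc]
  exact (hP.mul_mul_conjTranspose_same C).trace_nonneg

/-- The trace of a positive semidefinite matrix dominates its entries. -/
lemma abs_apply_le_trace {X : Matrix (Fin n) (Fin n) ℝ} (hX : X.PosSemidef) (i j : Fin n) :
    |X i j| ≤ trace X := by
  have hdiag : ∀ k, X k k ≤ trace X := fun k =>
    Finset.single_le_sum (f := fun k => X k k) (fun k _ => hX.diag_nonneg) (Finset.mem_univ k)
  have hsymm : X j i = X i j := by simpa using hX.1.apply i j
  have hplus := hX.dotProduct_mulVec_nonneg (Pi.single i 1 + Pi.single j 1)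
  have hminus := hX.dotProduct_mulVec_nonneg (Pi.single i 1 - Pi.single j 1)
  simp [mulVec_add, mulVec_sub, dotProduct_add, dotProduct_sub, add_dotProduct, sub_dotProduct,
    hsymm] at hplus hminus
  rw [abs_le]
  constructor <;> linarith [hdiag i, hdiag j]

/-- A solution of the Lyapunov equation is a storage function: along the orbit it decreases by
exactly `tr (Q * Xₜ)`. -/
lemma trace_dissipation {w : ι → ℝ} {M : ι → Matrix (Fin n) (Fin n) ℝ}
    {P Q : Matrix (Fin n) (Fin n) ℝ} (hP : P = Q + adjointMap w M P)
    (X : Matrix (Fin n) (Fin n) ℝ) :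
    trace (P * X) = trace (Q * X) + trace (P * momentMap w M X) := by
  rw [trace_mul_momentMap, ← trace_add, ← add_mul, ← hP]

lemma tendsto_zero_of_lyapunov {w : ι → ℝ} (hw : ∀ k, 0 ≤ w k)
    {M : ι → Matrix (Fin n) (Fin n) ℝ} {P : Matrix (Fin n) (Fin n) ℝ} (hPpos : P.PosDef)
    (hP : P = 1 + adjointMap w M P) {X : Matrix (Fin n) (Fin n) ℝ} (hX : X.PosSemidef) :
    Tendsto (fun t => (momentMap w M)^[t] X) atTop (nhds 0) := by
  have hpsd := iterate_momentMap_posSemidef hw M hX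
  set v : ℕ → ℝ := fun t => trace (P * (momentMap w M)^[t] X) with hv
  have hstep : ∀ t, trace ((momentMap w M)^[t] X) = v t - v (t + 1) := fun t => by
    have h := trace_dissipation hP ((momentMap w M)^[t] X)
    simp only [hv, Function.iterate_succ_apply']
    rw [one_mul] at h
    linarith
  have hanti : Antitone v := antitone_nat_of_succ_le fun t => by
    linarith [hstep t, (hpsd t).trace_nonneg]
  have hbdd : BddBelow (Set.range v) :=
    ⟨0, by rintro _ ⟨t, rfl⟩; exact trace_mul_nonneg hPpos.posSemidef (hpsd t)⟩
  have hlim := tendsto_atTop_ciInf hanti hbdd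
  have htrace : Tendsto (fun t => trace ((momentMap w M)^[t] X)) atTop (nhds 0) := by
    simpa [hstep] using hlim.sub (hlim.comp (tendsto_add_atTop_nat 1))
  refine tendsto_pi_nhds.2 fun i => tendsto_pi_nhds.2 fun j => ?_
  exact squeeze_zero_norm (fun t => abs_apply_le_trace (hpsd t) i j) htrace

lemma tendsto_trace_mul {w : ι → ℝ} {M : ι → Matrix (Fin n) (Fin n) ℝ}
    {X : Matrix (Fin n) (Fin n) ℝ}
    (hX : Tendsto (fun t => (momentMap w M)^[t] X) atTop (nhds 0))
    (P : Matrix (Fin n) (Fin n) ℝ) :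
    Tendsto (fun t => trace (P * (momentMap w M)^[t] X)) atTop (nhds 0) := by
  have hcont : Continuous fun Y : Matrix (Fin n) (Fin n) ℝ => trace (P * Y) := by fun_prop
  simpa [Function.comp_def] using (hcont.tendsto 0).comp hX

lemma eq_zero_of_adjointMap_eq_self {w : ι → ℝ} {M : ι → Matrix (Fin n) (Fin n) ℝ}
    (h : ∀ X : Matrix (Fin n) (Fin n) ℝ, X.PosSemidef →
      Tendsto (fun t => (momentMap w M)^[t] X) atTop (nhds 0))
    {P : Matrix (Fin n) (Fin n) ℝ} (hsymm : Pᵀ = P) (hP : P = adjointMap w M P) : P = 0 := by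
  have hquad : ∀ x, x ⬝ᵥ (P *ᵥ x) = 0 := fun x => by
    have hconst : ∀ t,
        trace (P * (momentMap w M)^[t] (vecMulVec x x)) = trace (P * vecMulVec x x) := by
      intro t
      induction t with
      | zero => rfl
      | succ t ih => rw [Function.iterate_succ_apply', trace_mul_momentMap, ← hP, ih]
    have hlim := tendsto_trace_mul (h _ (vecMulVec_self_posSemidef x)) P
    simp only [hconst] at hlim
    rw [← trace_mul_vecMulVec_self]
    exact tendsto_nhds_unique tendsto_const_nhds hlim
  have hpsd : P.PosSemidef := PosSemidef.of_dotProduct_mulVec_nonneg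
    ((conjTranspose_eq_transpose_of_trivial P).trans hsymm)
    fun x => by simpa using (hquad x).ge
  refine hpsd.trace_eq_zero_iff.1 (Finset.sum_eq_zero fun i _ => ?_)
  simpa using hquad (Pi.single i 1)

lemma exists_lyapunov_solution {w : ι → ℝ} {M : ι → Matrix (Fin n) (Fin n) ℝ}
    (h : ∀ X : Matrix (Fin n) (Fin n) ℝ, X.PosSemidef →
      Tendsto (fun t => (momentMap w M)^[t] X) atTop (nhds 0))
    {Q : Matrix (Fin n) (Fin n) ℝ} (hQ : Qᵀ = Q) :
    ∃ P : Matrix (Fin n) (Fin n) ℝ, Pᵀ = P ∧ P = Q + adjointMap w M P := by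
  -- Symmetrizing the argument forces solutions with symmetric right-hand side to be symmetric,
  -- so that injectivity need only be tested on symmetric matrices.
  let S : Matrix (Fin n) (Fin n) ℝ →ₗ[ℝ] Matrix (Fin n) (Fin n) ℝ :=
    (1 / 2 : ℝ) • (LinearMap.id + (transposeLinearEquiv (Fin n) (Fin n) ℝ ℝ).toLinearMap)
  have hS : ∀ P, S P = (1 / 2 : ℝ) • (P + Pᵀ) := fun P => rfl
  have hS_symm : ∀ P, (S P)ᵀ = S P := fun P => by
    rw [hS, transpose_smul, transpose_add, transpose_transpose, add_comm]
  have hS_fix : ∀ P, Pᵀ = P → S P = P := fun P hP => by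
    rw [hS, hP, ← two_smul ℝ P, smul_smul]; norm_num
  let T : Matrix (Fin n) (Fin n) ℝ →ₗ[ℝ] Matrix (Fin n) (Fin n) ℝ :=
    LinearMap.id - (adjointMap w M).comp S
  have key : ∀ P R, Rᵀ = R → T P = R → Pᵀ = P ∧ P = R + adjointMap w M P := by
    intro P R hR hPR
    have hP : P = R + adjointMap w M (S P) := sub_eq_iff_eq_add.1 hPR
    have hsymm : Pᵀ = P := by
      rw [hP, transpose_add, transpose_adjointMap, hS_symm, hR]
    exact ⟨hsymm, by rwa [hS_fix P hsymm] at hP⟩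
  have hinj : Function.Injective T := (injective_iff_map_eq_zero T).2 fun P hP => by
    obtain ⟨hsymm, hfix⟩ := key P 0 transpose_zero hP
    exact eq_zero_of_adjointMap_eq_self h hsymm (by rwa [zero_add] at hfix)
  obtain ⟨P, hP⟩ := LinearMap.injective_iff_surjective.1 hinj Q
  exact ⟨P, key P Q hQ hP⟩

lemma posDef_of_lyapunov {w : ι → ℝ} (hw : ∀ k, 0 ≤ w k)
    {M : ι → Matrix (Fin n) (Fin n) ℝ}
    (h : ∀ X : Matrix (Fin n) (Fin n) ℝ, X.PosSemidef →
      Tendsto (fun t => (momentMap w M)^[t] X) atTop (nhds 0))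
    {P Q : Matrix (Fin n) (Fin n) ℝ} (hQ : Q.PosDef) (hsymm : Pᵀ = P)
    (hP : P = Q + adjointMap w M P) : P.PosDef := by
  refine PosDef.of_dotProduct_mulVec_pos
    ((conjTranspose_eq_transpose_of_trivial P).trans hsymm) fun {x} hx => ?_
  have hx0 := vecMulVec_self_posSemidef x
  set X := vecMulVec x x with hX
  -- From time `1` on, the storage function is at most its initial value minus the first decrement.
  have hle : ∀ t, trace (P * (momentMap w M)^[t + 1] X) ≤ trace (P * X) - trace (Q * X) := by
    intro t
    induction t with
    | zero =>
      have := trace_dissipation hP X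
      simp only [zero_add, Function.iterate_one]
      linarith
    | succ t ih =>
      have hd := trace_dissipation hP ((momentMap w M)^[t + 1] X)
      have hnn := trace_mul_nonneg hQ.posSemidef (iterate_momentMap_posSemidef hw M hx0 (t + 1))
      rw [Function.iterate_succ_apply']
      linarith
  have hlim := (tendsto_trace_mul (h X hx0) P).comp (tendsto_add_atTop_nat 1)
  have h0 := le_of_tendsto' hlim hle
  have hQx := hQ.dotProduct_mulVec_pos hx
  rw [hX, trace_mul_vecMulVec_self, trace_mul_vecMulVec_self] at h0
  simp only [star_trivial] at hQx ⊢
  linarith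

end PositiveMap

/-- Mean-square stability characterization: the second-moment iteration
`X_{t+1} = L(X_t)` converges to zero for all PSD initial conditions iff for every
positive definite `Q` the generalized Lyapunov equation has a positive definite solution `P`. -/
theorem meanSquareStable_iff_glyap {n m p q : ℕ}
    (A : Matrix (Fin n) (Fin n) ℝ) (B : Matrix (Fin n) (Fin m) ℝ)
    (K : Matrix (Fin m) (Fin n) ℝ)
    (As : Fin p → Matrix (Fin n) (Fin n) ℝ)
    (Bs : Fin q → Matrix (Fin n) (Fin m) ℝ)
    (α : Fin p → ℝ) (β : Fin q → ℝ)
    (hα : ∀ i, 0 ≤ α i) (hβ : ∀ j, 0 ≤ β j)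
    (L : Matrix (Fin n) (Fin n) ℝ → Matrix (Fin n) (Fin n) ℝ)
    (hL : ∀ X, L X = (A + B * K) * X * (A + B * K)ᵀ
        + ∑ i, α i • (As i * X * (As i)ᵀ)
        + ∑ j, β j • ((Bs j * K) * X * (Bs j * K)ᵀ)) :
    (∀ X₀ : Matrix (Fin n) (Fin n) ℝ, X₀.PosSemidef →
        Tendsto (fun t => L^[t] X₀) atTop (nhds 0)) ↔
    (∀ Q : Matrix (Fin n) (Fin n) ℝ, Q.PosDef →
        ∃ P : Matrix (Fin n) (Fin n) ℝ, P.PosDef ∧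
          P = Q + (A + B * K)ᵀ * P * (A + B * K)
            + ∑ i, α i • ((As i)ᵀ * P * As i)
            + ∑ j, β j • (Kᵀ * (Bs j)ᵀ * P * (Bs j * K))) := by
  -- One index type for the nominal term (weight `1`) and the two families of noise terms.
  let w : Unit ⊕ (Fin p ⊕ Fin q) → ℝ := Sum.elim (fun _ => 1) (Sum.elim α β)
  let M : Unit ⊕ (Fin p ⊕ Fin q) → Matrix (Fin n) (Fin n) ℝ :=
    Sum.elim (fun _ => A + B * K) (Sum.elim As fun j => Bs j * K)
  have hw : ∀ k, 0 ≤ w k := by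
    rintro (_ | i | j)
    exacts [zero_le_one, hα i, hβ j]
  have hLM : L = momentMap w M := funext fun X => by
    simp [hL, momentMap, w, M, Fintype.sum_sum_type, add_assoc]
  have hadj : ∀ P Q : Matrix (Fin n) (Fin n) ℝ, Q + (A + B * K)ᵀ * P * (A + B * K)
      + ∑ i, α i • ((As i)ᵀ * P * As i)
      + ∑ j, β j • (Kᵀ * (Bs j)ᵀ * P * (Bs j * K)) = Q + adjointMap w M P := fun P Q => by
    simp [adjointMap, w, M, Fintype.sum_sum_type, add_assoc, transpose_mul]
  simp only [hLM, hadj]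
  constructor
  · intro h Q hQ
    obtain ⟨P, hsymm, hP⟩ := exists_lyapunov_solution h (Q := Q) (by simpa using hQ.1.eq)
    exact ⟨P, posDef_of_lyapunov hw h hQ hsymm hP, hP⟩
  · intro h X hX
    obtain ⟨P, hPpos, hP⟩ := h 1 PosDef.one
    exact tendsto_zero_of_lyapunov hw hPpos hP hX
end

section
/- Let A, A_1,...,A_p be n×n real matrices, B an n×m real matrix, B_1,...,B_q n×m real matrices, K an m×n real matrix, α_1,...,α_p ≥ 0, β_1,...,β_q ≥ 0, Q a symmetric positive definite n×n matrix. If there exists a symmetric positive definite matrix P satisfying the generalized Lyapunov equation P = Q + (A+BK)ᵀ P (A+BK) + Σ_{i=1}^p α_i A_iᵀ P A_i + Σ_{j=1}^q β_j Kᵀ B_jᵀ P B_j K, then the spectral radius of A + BK is strictly less than 1. -/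
/-!
Write `M = A + B * K`. The Lyapunov equation exhibits the Stein difference `P - Mᵀ * P * M` as `Q`
plus a sum of positive semidefinite matrices, so it is positive definite. If `M v = μ v` with
`v = x + i y ≠ 0`, then evaluating the quadratic forms at the real vectors `x` and `y` gives
`(1 - |μ|²) (xᵀ P x + yᵀ P y) > 0` (the cross terms cancel), hence `|μ| < 1`. As a matrix has only
finitely many eigenvalues, the supremum of their moduli is also strictly less than `1`.
-/

open Matrix

/-- The noise terms of the Lyapunov equation are positive semidefinite, so they only help the
Stein difference `P - (A + B * K)ᵀ * P * (A + B * K)` to be positive definite. -/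
lemma stein_posDef_of_glyap {n m p q : ℕ}
    (A : Matrix (Fin n) (Fin n) ℝ) (B : Matrix (Fin n) (Fin m) ℝ)
    (K : Matrix (Fin m) (Fin n) ℝ)
    (As : Fin p → Matrix (Fin n) (Fin n) ℝ)
    (Bs : Fin q → Matrix (Fin n) (Fin m) ℝ)
    (α : Fin p → ℝ) (β : Fin q → ℝ)
    (hα : ∀ i, 0 ≤ α i) (hβ : ∀ j, 0 ≤ β j)
    (Q : Matrix (Fin n) (Fin n) ℝ) (hQ : Q.PosDef)
    (P : Matrix (Fin n) (Fin n) ℝ) (hP : P.PosDef)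
    (hglyap : P = Q + (A + B * K)ᵀ * P * (A + B * K)
        + ∑ i, α i • ((As i)ᵀ * P * As i)
        + ∑ j, β j • (Kᵀ * (Bs j)ᵀ * P * (Bs j * K))) :
    (P - (A + B * K)ᵀ * P * (A + B * K)).PosDef := by
  have hAs : (∑ i, α i • ((As i)ᵀ * P * As i)).PosSemidef :=
    posSemidef_sum _ fun i _ => by
      simpa using (hP.posSemidef.conjTranspose_mul_mul_same (As i)).smul (hα i)
  have hBs : (∑ j, β j • (Kᵀ * (Bs j)ᵀ * P * (Bs j * K))).PosSemidef :=
    posSemidef_sum _ fun j _ => by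
      simpa using (hP.posSemidef.conjTranspose_mul_mul_same (Bs j * K)).smul (hβ j)
  have hsum : P - (A + B * K)ᵀ * P * (A + B * K)
      = Q + ∑ i, α i • ((As i)ᵀ * P * As i)
        + ∑ j, β j • (Kᵀ * (Bs j)ᵀ * P * (Bs j * K)) := by
    nth_rewrite 1 [hglyap]
    abel
  rw [hsum]
  exact (hQ.add_posSemidef hAs).add_posSemidef hBs

/-- Stein's criterion for a complex eigenvalue, proved on the real and imaginary parts of an
eigenvector. -/
lemma norm_lt_one_of_stein_posDef {n : ℕ} {M P : Matrix (Fin n) (Fin n) ℝ}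
    (hP : P.PosDef) (hS : (P - Mᵀ * P * M).PosDef) {μ : ℂ} {v : Fin n → ℂ} (hv : v ≠ 0)
    (hμ : M.map (algebraMap ℝ ℂ) *ᵥ v = μ • v) : ‖μ‖ < 1 := by
  set x : Fin n → ℝ := fun i => (v i).re with hx
  set y : Fin n → ℝ := fun i => (v i).im with hy
  have hMx : M *ᵥ x = μ.re • x - μ.im • y := by
    ext i
    simpa [mulVec, dotProduct, hx, hy] using congrArg Complex.re (congrFun hμ i)
  have hMy : M *ᵥ y = μ.re • y + μ.im • x := by
    ext i
    simpa [mulVec, dotProduct, hx, hy] using congrArg Complex.im (congrFun hμ i)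
  have hform : ∀ z : Fin n → ℝ, z ⬝ᵥ ((P - Mᵀ * P * M) *ᵥ z)
      = z ⬝ᵥ (P *ᵥ z) - (M *ᵥ z) ⬝ᵥ (P *ᵥ (M *ᵥ z)) := by
    intro z
    rw [sub_mulVec, dotProduct_sub, ← mulVec_mulVec, ← mulVec_mulVec, mulVec_transpose,
      dotProduct_comm z (_ ᵥ* M), ← dotProduct_mulVec, dotProduct_comm (P *ᵥ _)]
  have hstein : x ⬝ᵥ ((P - Mᵀ * P * M) *ᵥ x) + y ⬝ᵥ ((P - Mᵀ * P * M) *ᵥ y)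
      = (1 - ‖μ‖ ^ 2) * (x ⬝ᵥ (P *ᵥ x) + y ⬝ᵥ (P *ᵥ y)) := by
    rw [hform, hform, hMx, hMy, Complex.sq_norm, Complex.normSq_apply]
    simp only [mulVec_add, mulVec_sub, mulVec_smul, dotProduct_add, dotProduct_sub, add_dotProduct,
      sub_dotProduct, smul_dotProduct, dotProduct_smul, smul_eq_mul]
    ring
  have hxy : x ≠ 0 ∨ y ≠ 0 := by
    by_contra! h
    exact hv (funext fun i => Complex.ext (congrFun h.1 i) (congrFun h.2 i))
  have hpos : ∀ {T : Matrix (Fin n) (Fin n) ℝ}, T.PosDef →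
      0 < x ⬝ᵥ (T *ᵥ x) + y ⬝ᵥ (T *ᵥ y) := by
    intro T hT
    have hx0 : 0 ≤ x ⬝ᵥ (T *ᵥ x) := by simpa using hT.posSemidef.dotProduct_mulVec_nonneg x
    have hy0 : 0 ≤ y ⬝ᵥ (T *ᵥ y) := by simpa using hT.posSemidef.dotProduct_mulVec_nonneg y
    rcases hxy with h | h
    · have : 0 < x ⬝ᵥ (T *ᵥ x) := by simpa using hT.dotProduct_mulVec_pos h
      linarith
    · have : 0 < y ⬝ᵥ (T *ᵥ y) := by simpa using hT.dotProduct_mulVec_pos h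
      linarith
  have hlt : 0 < 1 - ‖μ‖ ^ 2 := pos_of_mul_pos_left (hstein ▸ hpos hS) (hpos hP).le
  nlinarith [norm_nonneg μ]

/-- The spectrum being finite, a strict bound on each eigenvalue passes to the supremum. -/
lemma spectralRadius_lt_one_of_forall_norm_lt_one {n : ℕ} {N : Matrix (Fin n) (Fin n) ℂ}
    (h : ∀ μ ∈ spectrum ℂ N, ‖μ‖ < 1) : spectralRadius ℂ N < 1 := by
  have hfin : (spectrum ℂ N).Finite := N.finite_spectrum
  have hsup : spectralRadius ℂ N = hfin.toFinset.sup fun μ => (‖μ‖₊ : ENNReal) := by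
    simp [spectralRadius, Finset.sup_eq_iSup]
  rw [hsup, Finset.sup_lt_iff (by simp)]
  intro μ hμ
  exact_mod_cast h μ (hfin.mem_toFinset.1 hμ)

/-- If the generalized Lyapunov equation has a positive definite solution `P` for a
positive definite `Q`, then the spectral radius of `A + BK` is strictly less than 1. -/
theorem glyap_implies_spectralRadius_lt_one {n m p q : ℕ}
    (A : Matrix (Fin n) (Fin n) ℝ) (B : Matrix (Fin n) (Fin m) ℝ)
    (K : Matrix (Fin m) (Fin n) ℝ)
    (As : Fin p → Matrix (Fin n) (Fin n) ℝ)
    (Bs : Fin q → Matrix (Fin n) (Fin m) ℝ)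
    (α : Fin p → ℝ) (β : Fin q → ℝ)
    (hα : ∀ i, 0 ≤ α i) (hβ : ∀ j, 0 ≤ β j)
    (Q : Matrix (Fin n) (Fin n) ℝ) (hQ : Q.PosDef)
    (P : Matrix (Fin n) (Fin n) ℝ) (hP : P.PosDef)
    (hglyap : P = Q + (A + B * K)ᵀ * P * (A + B * K)
        + ∑ i, α i • ((As i)ᵀ * P * As i)
        + ∑ j, β j • (Kᵀ * (Bs j)ᵀ * P * (Bs j * K))) :
    spectralRadius ℂ ((A + B * K).map (algebraMap ℝ ℂ)) < 1 := by
  refine spectralRadius_lt_one_of_forall_norm_lt_one fun μ hμ => ?_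
  rw [← spectrum_toLin', ← Module.End.hasEigenvalue_iff_mem_spectrum] at hμ
  obtain ⟨v, hv⟩ := hμ.exists_hasEigenvector
  exact norm_lt_one_of_stein_posDef hP
    (stein_posDef_of_glyap A B K As Bs α β hα hβ Q hQ P hP hglyap) hv.2
    (by simpa using hv.apply_eq_smul)
end

section
/- Let A and A_i be n×n real matrices, P symmetric positive definite, Q symmetric with Q ⪰ I, and α > 0. Suppose λ is a real number such that λ ((1/α) Q + 2 A_iᵀ P A_i) ⪰ (Aᵀ P A_i + A_iᵀ P A)⁺ − (1/√α) Q. Then every ζ ≥ λ satisfies the nonlinear matrix inequality (1/(√(ζ² + α) − ζ)) Q + 2 ζ A_iᵀ P A_i ⪰ (Aᵀ P A_i + A_iᵀ P A)⁺. -/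
/-!
Since `1 / (√(ζ² + α) - ζ) = (√(ζ² + α) + ζ) / α`, the scalar coefficient dominates its tangent
line `1 / √α + ζ / α` at `ζ = 0` (`tangent_bound`). With `M = Aᵢᵀ P Aᵢ ⪰ 0` and `S⁺` the positive
part, the matrix that must be positive semidefinite splits as the sum of

* the hypothesis `l (Q/α + 2M) - (S⁺ - Q/√α)`,
* `(ζ - l) (Q/α + 2M)`, and
* `(1 / (√(ζ² + α) - ζ) - 1/√α - ζ/α) Q`,

each of which is positive semidefinite because `Q ⪰ I ⪰ 0`. No property of `S⁺` is needed beyond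
its presence on both sides.
-/

/-- The function `ζ ↦ 1 / (√(ζ² + α) - ζ)` lies above its tangent line at `ζ = 0`. -/
lemma tangent_bound {α : ℝ} (hα : 0 < α) (ζ : ℝ) :
    1 / Real.sqrt α + ζ / α ≤ 1 / (Real.sqrt (ζ ^ 2 + α) - ζ) := by
  have hs : Real.sqrt (ζ ^ 2 + α) ^ 2 = ζ ^ 2 + α := Real.sq_sqrt (by positivity)
  have hpos : 0 < Real.sqrt (ζ ^ 2 + α) - ζ :=
    sub_pos.mpr (Real.lt_sqrt_of_sq_lt (by linarith))
  have hmono : Real.sqrt α ≤ Real.sqrt (ζ ^ 2 + α) :=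
    Real.sqrt_le_sqrt (by linarith [sq_nonneg ζ])
  have hrat : 1 / (Real.sqrt (ζ ^ 2 + α) - ζ) = (Real.sqrt (ζ ^ 2 + α) + ζ) / α := by
    rw [div_eq_div_iff hpos.ne' hα.ne']
    linear_combination -hs
  have hα' : 1 / Real.sqrt α = Real.sqrt α / α := Real.sqrt_div_self'.symm
  rw [hrat, hα', ← add_div]
  gcongr


open Matrix

/-- The positive semidefinite part `S⁺` of a (symmetric) matrix, obtained by applying
`x ↦ max x 0` to `S` via the continuous functional calculus. -/
noncomputable def matPosPart {N : Type*} [Fintype N] [DecidableEq N]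
    (S : Matrix N N ℝ) : Matrix N N ℝ :=
  cfc (fun x : ℝ => max x 0) S

/-- Conservative simplification via linearization at `ζ = 0` (Lemma 3): if
`λ((1/α)Q + 2AᵢᵀPAᵢ) ⪰ (AᵀPAᵢ + AᵢᵀPA)⁺ − (1/√α)Q`, then every `ζ ≥ λ` satisfies the
nonlinear matrix inequality `(1/(√(ζ²+α)−ζ))Q + 2ζAᵢᵀPAᵢ ⪰ (AᵀPAᵢ + AᵢᵀPA)⁺`. -/
theorem conservative_linearized_condition {n : ℕ}
    (A Ai : Matrix (Fin n) (Fin n) ℝ)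
    (P : Matrix (Fin n) (Fin n) ℝ) (hP : P.PosDef)
    (Q : Matrix (Fin n) (Fin n) ℝ) (hQsym : Q.IsHermitian) (hQ : (Q - 1).PosSemidef)
    (α : ℝ) (hα : 0 < α) (l : ℝ)
    (hl : (l • ((1 / α) • Q + (2 : ℝ) • (Aiᵀ * P * Ai))
        - (matPosPart (Aᵀ * P * Ai + Aiᵀ * P * A) - (1 / Real.sqrt α) • Q)).PosSemidef) :
    ∀ ζ : ℝ, l ≤ ζ →
      (((1 / (Real.sqrt (ζ ^ 2 + α) - ζ)) • Q + (2 * ζ) • (Aiᵀ * P * Ai))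
        - matPosPart (Aᵀ * P * Ai + Aiᵀ * P * A)).PosSemidef := by
  intro ζ hζ
  have hQ0 : Q.PosSemidef := by
    simpa using hQ.add PosSemidef.one
  have hM : (Aiᵀ * P * Ai).PosSemidef := by
    simpa [conjTranspose_eq_transpose_of_trivial] using
      hP.posSemidef.conjTranspose_mul_mul_same Ai
  have hslope : ((1 / α) • Q + (2 : ℝ) • (Aiᵀ * P * Ai)).PosSemidef :=
    (hQ0.smul (by positivity)).add (hM.smul (by norm_num))
  have hgap := hQ0.smul (sub_nonneg.mpr (tangent_bound hα ζ))
  convert (hl.add (hslope.smul (sub_nonneg.mpr hζ))).add hgap using 1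
  module
end

section
/- Let A, A_1,...,A_p be n×n real matrices, η_1,...,η_p ≥ 0, and α_1,...,α_p with α_i ≥ η_i (1 + Σ_{j=1}^p η_j) for each i. Suppose there exists a symmetric positive definite matrix P with P ≻ (√(1 + Σ_{i=1}^p η_i) A)ᵀ P (√(1 + Σ_{i=1}^p η_i) A) + Σ_{i=1}^p α_i A_iᵀ P A_i. Then for all scalars μ_1,...,μ_p with |μ_i| < η_i for each i, the deterministic system x_{t+1} = (A + Σ_{i=1}^p μ_i A_i) x_t is stable; that is, the spectral radius of A + Σ_{i=1}^p μ_i A_i is strictly less than 1. -/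
/-!
With `Q v = vᵀ P v`, weighted convexity of `Q` gives
`Q (a + ∑ μᵢ cᵢ) ≤ (1 + ∑ ηᵢ) (Q a + ∑ ηᵢ Q cᵢ)` whenever `|μᵢ| < ηᵢ`. Applied to `a = A x`,
`cᵢ = Aᵢ x`, the right side is at most the quadratic form subtracted from `P` in the Lyapunov
hypothesis, so `Q (M x) < Q x` for `M = A + ∑ μᵢ Aᵢ` and real `x ≠ 0`. If `x + i y` is a complex
eigenvector of `M` with eigenvalue `l`, then `Q (M x) + Q (M y) = |l|² (Q x + Q y)`, hence
`|l| < 1`. The spectrum is finite, so the strict bound passes to the spectral radius.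
-/

open Matrix

lemma quad_add_smul {n : ℕ} {P : Matrix (Fin n) (Fin n) ℝ} (hP : Pᵀ = P)
    (b c : Fin n → ℝ) (r s : ℝ) :
    (r • b + s • c) ⬝ᵥ P *ᵥ (r • b + s • c)
      = r ^ 2 * (b ⬝ᵥ P *ᵥ b) + 2 * r * s * (b ⬝ᵥ P *ᵥ c) + s ^ 2 * (c ⬝ᵥ P *ᵥ c) := by
  have h : c ⬝ᵥ P *ᵥ b = b ⬝ᵥ P *ᵥ c := by
    rw [dotProduct_mulVec, ← mulVec_transpose, hP, dotProduct_comm]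
  simp only [mulVec_add, mulVec_smul, dotProduct_add, add_dotProduct, smul_dotProduct,
    dotProduct_smul, smul_eq_mul, h]
  ring

/-- Weighted convexity of a nonnegative quadratic form, with weights `1, ηᵢ` of total mass
`1 + ∑ ηᵢ`. -/
lemma quad_add_sum_le {n : ℕ} {ι : Type*} {P : Matrix (Fin n) (Fin n) ℝ} (hP : Pᵀ = P)
    (hQ : ∀ v : Fin n → ℝ, 0 ≤ v ⬝ᵥ P *ᵥ v) (η μ : ι → ℝ) (hμ : ∀ i, |μ i| < η i)
    (a : Fin n → ℝ) (c : ι → Fin n → ℝ) (s : Finset ι) :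
    (a + ∑ i ∈ s, μ i • c i) ⬝ᵥ P *ᵥ (a + ∑ i ∈ s, μ i • c i)
      ≤ (1 + ∑ i ∈ s, η i) * (a ⬝ᵥ P *ᵥ a + ∑ i ∈ s, η i * (c i ⬝ᵥ P *ᵥ c i)) := by
  classical
  have hη : ∀ i, 0 < η i := fun i => (abs_nonneg _).trans_lt (hμ i)
  induction s using Finset.induction_on with
  | empty => simp
  | insert j s hj ih =>
    rw [Finset.sum_insert hj, Finset.sum_insert hj, Finset.sum_insert hj]
    have hT : 0 < 1 + ∑ i ∈ s, η i :=
      add_pos_of_pos_of_nonneg one_pos (Finset.sum_nonneg fun i _ => (hη i).le)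
    rw [show a + (μ j • c j + ∑ i ∈ s, μ i • c i)
      = (1 : ℝ) • (a + ∑ i ∈ s, μ i • c i) + μ j • c j by rw [one_smul]; abel]
    generalize a + ∑ i ∈ s, μ i • c i = b at ih ⊢
    -- Young's inequality for the cross term, balanced between the masses `η j` and `T`.
    have hY := hQ (η j • b + (-((1 + ∑ i ∈ s, η i) * μ j)) • c j)
    rw [quad_add_smul hP] at hY ⊢
    have hc := hQ (c j)
    have hm : μ j ^ 2 ≤ η j ^ 2 := sq_le_sq' (by linarith [(abs_lt.1 (hμ j)).1])
      (abs_lt.1 (hμ j)).2.le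
    have he := hη j
    rw [show 1 + (η j + ∑ i ∈ s, η i) = (1 + ∑ i ∈ s, η i) + η j by ring,
      show a ⬝ᵥ P *ᵥ a + (η j * (c j ⬝ᵥ P *ᵥ c j) + ∑ i ∈ s, η i * (c i ⬝ᵥ P *ᵥ c i))
        = (a ⬝ᵥ P *ᵥ a + ∑ i ∈ s, η i * (c i ⬝ᵥ P *ᵥ c i)) + η j * (c j ⬝ᵥ P *ᵥ c j) by ring]
    generalize 1 + ∑ i ∈ s, η i = T at *
    generalize a ⬝ᵥ P *ᵥ a + ∑ i ∈ s, η i * (c i ⬝ᵥ P *ᵥ c i) = R at *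
    generalize c j ⬝ᵥ P *ᵥ c j = C at *
    generalize b ⬝ᵥ P *ᵥ c j = D at *
    generalize b ⬝ᵥ P *ᵥ b = B at *
    refine le_of_mul_le_mul_left ?_ (mul_pos he hT)
    have h1 := mul_le_mul_of_nonneg_left ih (mul_nonneg he.le (add_pos hT he).le)
    have h2 := mul_le_mul_of_nonneg_right hm (mul_nonneg hc (mul_nonneg hT.le (add_pos hT he).le))
    linarith

/-- A discrete Lyapunov function bounds every complex eigenvalue: for the real and imaginary
parts `x`, `y` of an eigenvector, applying `M` to both multiplies `Q x + Q y` by `|l|²`. -/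
lemma norm_lt_one_of_quad_lt {n : ℕ} {P : Matrix (Fin n) (Fin n) ℝ} (hP : Pᵀ = P)
    (hQ : ∀ v : Fin n → ℝ, 0 ≤ v ⬝ᵥ P *ᵥ v) (M : Matrix (Fin n) (Fin n) ℝ)
    (hM : ∀ x : Fin n → ℝ, x ≠ 0 → (M *ᵥ x) ⬝ᵥ P *ᵥ (M *ᵥ x) < x ⬝ᵥ P *ᵥ x)
    {l : ℂ} {v : Fin n → ℂ} (hv : v ≠ 0) (h : M.map (algebraMap ℝ ℂ) *ᵥ v = l • v) :
    ‖l‖ < 1 := by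
  obtain ⟨x, hx⟩ : ∃ x : Fin n → ℝ, x = fun i => (v i).re := ⟨_, rfl⟩
  obtain ⟨y, hy⟩ : ∃ y : Fin n → ℝ, y = fun i => (v i).im := ⟨_, rfl⟩
  have h1 : M *ᵥ x = l.re • x + (-l.im) • y := by
    ext i
    have := congrArg Complex.re (congrFun h i)
    simp [mulVec, dotProduct] at this
    simp [mulVec, dotProduct, hx, hy, this]
    ring
  have h2 : M *ᵥ y = l.im • x + l.re • y := by
    ext i
    have := congrArg Complex.im (congrFun h i)
    simp [mulVec, dotProduct] at this
    simp [mulVec, dotProduct, hx, hy, this]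
    ring
  have hle : ∀ z : Fin n → ℝ, (M *ᵥ z) ⬝ᵥ P *ᵥ (M *ᵥ z) ≤ z ⬝ᵥ P *ᵥ z := fun z => by
    rcases eq_or_ne z 0 with rfl | hz
    · simp
    · exact (hM z hz).le
  have hlt : (M *ᵥ x) ⬝ᵥ P *ᵥ (M *ᵥ x) + (M *ᵥ y) ⬝ᵥ P *ᵥ (M *ᵥ y)
      < x ⬝ᵥ P *ᵥ x + y ⬝ᵥ P *ᵥ y := by
    by_cases hx0 : x = 0
    · refine add_lt_add_of_le_of_lt (hle x) (hM y fun hy0 => hv ?_)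
      ext i
      exact Complex.ext (by simpa [hx] using congrFun hx0 i) (by simpa [hy] using congrFun hy0 i)
    · exact add_lt_add_of_lt_of_le (hM x hx0) (hle y)
  rw [h1, h2, quad_add_smul hP, quad_add_smul hP] at hlt
  have hq := add_nonneg (hQ x) (hQ y)
  have hn : ‖l‖ ^ 2 = l.re ^ 2 + l.im ^ 2 := by
    rw [← Complex.normSq_eq_norm_sq, Complex.normSq_apply]; ring
  by_contra! hc
  have : 1 ≤ ‖l‖ ^ 2 := one_le_pow₀ hc
  rw [hn] at this
  nlinarith [mul_le_mul_of_nonneg_right this hq]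

/-- Robustness via stability of an auxiliary system (Theorem 4): a strict Lyapunov
inequality for the auxiliary stochastic system with scaled dynamics `√(1 + Σ ηᵢ) A` and
noise variances `αᵢ ≥ ηᵢ(1 + Σ ηⱼ)` implies deterministic stability of `A + Σ μᵢ Aᵢ`
for all `|μᵢ| < ηᵢ`. -/
theorem robust_stability_aux_system {n p : ℕ}
    (A : Matrix (Fin n) (Fin n) ℝ) (As : Fin p → Matrix (Fin n) (Fin n) ℝ)
    (η : Fin p → ℝ) (hη : ∀ i, 0 ≤ η i)
    (α : Fin p → ℝ) (hα : ∀ i, η i * (1 + ∑ j, η j) ≤ α i)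
    (P : Matrix (Fin n) (Fin n) ℝ) (hP : P.PosDef)
    (hlyap : (P - ((Real.sqrt (1 + ∑ i, η i) • A)ᵀ * P * (Real.sqrt (1 + ∑ i, η i) • A)
        + ∑ i, α i • ((As i)ᵀ * P * As i))).PosDef)
    (μ : Fin p → ℝ) (hμ : ∀ i, |μ i| < η i) :
    spectralRadius ℂ ((A + ∑ i, μ i • As i).map (algebraMap ℝ ℂ)) < 1 := by
  have hPt : Pᵀ = P := by simpa only [conjTranspose_eq_transpose_of_trivial] using hP.isHermitian.eq
  have hQ : ∀ v : Fin n → ℝ, 0 ≤ v ⬝ᵥ P *ᵥ v := fun v => by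
    simpa using hP.posSemidef.dotProduct_mulVec_nonneg v
  have hS : 0 ≤ 1 + ∑ i, η i := add_nonneg one_pos.le (Finset.sum_nonneg fun i _ => hη i)
  have hconj : ∀ (B : Matrix (Fin n) (Fin n) ℝ) (x : Fin n → ℝ),
      x ⬝ᵥ (Bᵀ * P * B) *ᵥ x = (B *ᵥ x) ⬝ᵥ P *ᵥ (B *ᵥ x) := fun B x => by
    rw [← mulVec_mulVec, ← mulVec_mulVec, dotProduct_mulVec, vecMul_transpose]
  have hM : ∀ x : Fin n → ℝ, x ≠ 0 →
      ((A + ∑ i, μ i • As i) *ᵥ x) ⬝ᵥ P *ᵥ ((A + ∑ i, μ i • As i) *ᵥ x) < x ⬝ᵥ P *ᵥ x := by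
    intro x hx
    have h1 := hlyap.dotProduct_mulVec_pos hx
    rw [star_trivial, sub_mulVec, add_mulVec, dotProduct_sub, dotProduct_add, hconj, sum_mulVec,
      dotProduct_sum] at h1
    simp only [smul_mulVec, dotProduct_smul, smul_dotProduct, mulVec_smul, hconj, smul_eq_mul]
      at h1
    rw [← mul_assoc, Real.mul_self_sqrt hS] at h1
    have h2 := quad_add_sum_le hPt hQ η μ hμ (A *ᵥ x) (fun i => As i *ᵥ x) Finset.univ
    have h3 : (1 + ∑ i, η i) * ∑ i, η i * ((As i *ᵥ x) ⬝ᵥ P *ᵥ (As i *ᵥ x))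
        ≤ ∑ i, α i * ((As i *ᵥ x) ⬝ᵥ P *ᵥ (As i *ᵥ x)) := by
      rw [Finset.mul_sum]
      refine Finset.sum_le_sum fun i _ => ?_
      have := mul_le_mul_of_nonneg_right (hα i) (hQ (As i *ᵥ x))
      linarith
    simp only [add_mulVec, sum_mulVec, smul_mulVec]
    linarith
  have hspec : ∀ l ∈ spectrum ℂ ((A + ∑ i, μ i • As i).map (algebraMap ℝ ℂ)), ‖l‖ < 1 := by
    intro l hl
    rw [← Matrix.spectrum_toLin', ← Module.End.hasEigenvalue_iff_mem_spectrum] at hl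
    obtain ⟨v, hv⟩ := hl.exists_hasEigenvector
    exact norm_lt_one_of_quad_lt hPt hQ _ hM hv.2 (by simpa using hv.apply_eq_smul)
  have hfin := Matrix.finite_spectrum (R := ℂ) ((A + ∑ i, μ i • As i).map (algebraMap ℝ ℂ))
  unfold spectralRadius
  have hle : ⨆ k ∈ spectrum ℂ ((A + ∑ i, μ i • As i).map (algebraMap ℝ ℂ)), (‖k‖₊ : ENNReal)
      ≤ hfin.toFinset.sup fun k => (‖k‖₊ : ENNReal) :=
    iSup₂_le fun k hk =>
      Finset.le_sup (f := fun k : ℂ => (‖k‖₊ : ENNReal)) (hfin.mem_toFinset.2 hk)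
  refine hle.trans_lt ((Finset.sup_lt_iff (by simp)).2 fun k hk => ?_)
  exact_mod_cast hspec k (hfin.mem_toFinset.1 hk)
end

section
/- Let A, A_1,...,A_p be n×n real matrices, η_1,...,η_p ≥ 0, and let P be a symmetric positive definite matrix satisfying P ≻ (1 + Σ_{i=1}^p η_i) Aᵀ P A + Σ_{i=1}^p η_i (1 + Σ_{j=1}^p η_j) A_iᵀ P A_i. Then for every sign pattern (k_1,...,k_p) ∈ {−1, +1}^p, P ≻ (A + Σ_{i=1}^p k_i η_i A_i)ᵀ P (A + Σ_{i=1}^p k_i η_i A_i). -/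
/-!
Write `Q(X) = XᵀPX`, which is positive semidefinite for every `X` because `P` is, and let
`Bᵢ = kᵢAᵢ`, so that `Q(Bᵢ) = Q(Aᵢ)`. With `c = 1 + ∑ ηᵢ > 0`, the claim reduces to the weighted
Jensen inequality `Q(A + ∑ ηᵢBᵢ) ⪯ c (Q(A) + ∑ ηᵢ Q(Bᵢ))`. This holds because the gap
is a variance: if `N = c⁻¹(A + ∑ ηᵢBᵢ)` denotes the weighted mean, then the gap equals
`c (Q(A - N) + ∑ ηᵢ Q(Bᵢ - N))` (`variance_identity`). Adding this positive semidefinite matrix to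
the positive definite one in the hypothesis gives the conclusion.
-/

open Matrix

/-- Expansion of the weighted sum of the forms `(Bᵢ - N)ᵀ P (Bᵢ - N)` around an arbitrary centre. -/
lemma sum_centered {n p : ℕ} (B : Fin p → Matrix (Fin n) (Fin n) ℝ) (η : Fin p → ℝ)
    (P N : Matrix (Fin n) (Fin n) ℝ) :
    ∑ i, η i • ((B i - N)ᵀ * P * (B i - N)) =
      ∑ i, η i • ((B i)ᵀ * P * B i) - (∑ i, η i • B i)ᵀ * P * N
        - Nᵀ * P * (∑ i, η i • B i) + (∑ i, η i) • (Nᵀ * P * N) := by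
  simp only [transpose_sum, transpose_smul, Finset.sum_mul, Finset.mul_sum, Finset.sum_smul,
    ← Finset.sum_sub_distrib, ← Finset.sum_add_distrib]
  refine Finset.sum_congr rfl fun i _ => ?_
  simp only [transpose_sub, sub_mul, mul_sub, smul_mul_assoc, mul_smul_comm]
  module

/-- The Jensen gap is `c` times the weighted variance about the mean `N`; here `c` is the total
weight, and `c • N` is the weighted sum, with `A` having weight one. -/
lemma variance_identity {n p : ℕ} (A : Matrix (Fin n) (Fin n) ℝ)
    (B : Fin p → Matrix (Fin n) (Fin n) ℝ) (η : Fin p → ℝ) (P N : Matrix (Fin n) (Fin n) ℝ)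
    (hN : A + ∑ i, η i • B i = (1 + ∑ i, η i) • N) :
    (1 + ∑ i, η i) • ((A - N)ᵀ * P * (A - N) + ∑ i, η i • ((B i - N)ᵀ * P * (B i - N))) =
      (1 + ∑ i, η i) • (Aᵀ * P * A + ∑ i, η i • ((B i)ᵀ * P * B i))
        - (A + ∑ i, η i • B i)ᵀ * P * (A + ∑ i, η i • B i) := by
  rw [sum_centered, hN, eq_sub_of_add_eq' hN]
  simp only [transpose_sub, transpose_smul, sub_mul, mul_sub, smul_mul_assoc, mul_smul_comm]
  module

/-- The vertex step of the auxiliary-system robustness theorem: if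
`P ≻ (1 + Σ ηᵢ) AᵀPA + Σ ηᵢ(1 + Σ ηⱼ) AᵢᵀPAᵢ`, then for every sign pattern
`kᵢ ∈ {−1, +1}`, `P ≻ (A + Σ kᵢηᵢAᵢ)ᵀ P (A + Σ kᵢηᵢAᵢ)`. -/
theorem aux_system_vertex_lyapunov {n p : ℕ}
    (A : Matrix (Fin n) (Fin n) ℝ) (As : Fin p → Matrix (Fin n) (Fin n) ℝ)
    (η : Fin p → ℝ) (hη : ∀ i, 0 ≤ η i)
    (P : Matrix (Fin n) (Fin n) ℝ) (hP : P.PosDef)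
    (hlyap : (P - ((1 + ∑ i, η i) • (Aᵀ * P * A)
        + ∑ i, (η i * (1 + ∑ j, η j)) • ((As i)ᵀ * P * As i))).PosDef)
    (k : Fin p → ℝ) (hk : ∀ i, k i = 1 ∨ k i = -1) :
    (P - (A + ∑ i, (k i * η i) • As i)ᵀ * P * (A + ∑ i, (k i * η i) • As i)).PosDef := by
  have hc : 0 < 1 + ∑ i, η i :=
    add_pos_of_pos_of_nonneg one_pos (Finset.sum_nonneg fun i _ => hη i)
  have hQ (X : Matrix (Fin n) (Fin n) ℝ) : (Xᵀ * P * X).PosSemidef := by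
    simpa using hP.posSemidef.conjTranspose_mul_mul_same X
  have hS : ∑ i, (k i * η i) • As i = ∑ i, η i • (k i • As i) :=
    Finset.sum_congr rfl fun i _ => by rw [smul_smul, mul_comm]
  have hsq (i : Fin p) : (k i • As i)ᵀ * P * (k i • As i) = (As i)ᵀ * P * As i := by
    rcases hk i with h | h <;> simp [h]
  have hT : ∑ i, (η i * (1 + ∑ j, η j)) • ((As i)ᵀ * P * As i) =
      (1 + ∑ j, η j) • ∑ i, η i • ((k i • As i)ᵀ * P * (k i • As i)) := by
    rw [Finset.smul_sum]
    exact Finset.sum_congr rfl fun i _ => by rw [hsq, smul_smul, mul_comm]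
  rw [hS]
  rw [hT, ← smul_add] at hlyap
  obtain ⟨N, hN⟩ : ∃ N, A + ∑ i, η i • (k i • As i) = (1 + ∑ i, η i) • N :=
    ⟨(1 + ∑ i, η i)⁻¹ • (A + ∑ i, η i • (k i • As i)), (smul_inv_smul₀ hc.ne' _).symm⟩
  have hgap := ((hQ (A - N)).add (posSemidef_sum Finset.univ fun i _ =>
    (hQ (k i • As i - N)).smul (hη i))).smul hc.le
  rw [variance_identity A (fun i => k i • As i) η P N hN] at hgap
  have h := hlyap.add_posSemidef hgap
  rwa [sub_add_sub_cancel] at h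
end
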